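/- Let A and B be n×n positive definite complex matrices, and let A ♮ B := (A^{-1}♯B)^{1/2} A (A^{-1}♯B)^{1/2} denote the spectral geometric mean. Then (A ♮ B)² is similar to AB: there exists an invertible n×n complex matrix S with (A ♮ B)² = S⁻¹ (A B) S. Consequently (A ♮ B)² and AB have the same characteristic polynomial. -/

import Mathlib

/-!
The geometric mean `G = A⁻¹ ♯ B` solves the Riccati equation `G A G = B`: if `P = (A⁻¹)^{1/2}`, then
`P A P = 1`, so in `G A G` the two inner square roots meet and multiply to `P⁻¹ B P⁻¹`
(`msharp_inv_mul_mul_self`).  With `H = G^{1/2}` one has `A ♮ B = H A H`, hence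
`(A ♮ B)² H = H A G A G = H (A B)`, that is, `(A ♮ B)² = H (A B) H⁻¹`, and `S = H⁻¹` works.

The only facts about real powers that are needed are positive definiteness (`mpow_posDef`) and
`A^r A^s = A^{r+s}` (`mpow_mul_mpow`); both are read off from the spectral decomposition.
-/

open Matrix
open scoped ComplexOrder

/-- Real power of a matrix by functional calculus on the eigenvalues
(junk value `0` if the matrix is not Hermitian).  Since eigenvalue powers
are real powers (`Real.rpow`) of real numbers, the conventions `0 ^ 0 = 1`
and `0 ^ s = 0` for `s > 0` hold on positive semidefinite matrices. -/
noncomputable def mpow {n : Type*} [Fintype n] [DecidableEq n]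
    (A : Matrix n n ℂ) (r : ℝ) : Matrix n n ℂ :=
  if hA : A.IsHermitian then
    (hA.eigenvectorUnitary : Matrix n n ℂ) *
      Matrix.diagonal (fun i => ((hA.eigenvalues i ^ r : ℝ) : ℂ)) *
      (star (hA.eigenvectorUnitary : Matrix n n ℂ))
  else 0

/-- The matrix geometric mean `A ♯ B = A^{1/2} (A^{-1/2} B A^{-1/2})^{1/2} A^{1/2}`. -/
noncomputable def msharp {n : Type*} [Fintype n] [DecidableEq n]
    (A B : Matrix n n ℂ) : Matrix n n ℂ :=
  mpow A (1/2) * mpow (mpow A (-(1/2)) * B * mpow A (-(1/2))) (1/2) * mpow A (1/2)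

/-- The weighted spectral fidelity `F_t^spec(ρ,σ) = Tr(ρ (ρ⁻¹ ♯ σ)^{2t})`. -/
noncomputable def specFid {n : Type*} [Fintype n] [DecidableEq n]
    (t : ℝ) (ρ σ : Matrix n n ℂ) : ℂ :=
  Matrix.trace (ρ * mpow (msharp ρ⁻¹ σ) (2 * t))

/-- The spectral geometric mean `A ♮ B = (A⁻¹ ♯ B)^{1/2} A (A⁻¹ ♯ B)^{1/2}`. -/
noncomputable def mspec {n : Type*} [Fintype n] [DecidableEq n]
    (A B : Matrix n n ℂ) : Matrix n n ℂ :=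
  mpow (msharp A⁻¹ B) (1/2) * A * mpow (msharp A⁻¹ B) (1/2)

section Powers

variable {n : Type*} [Fintype n] [DecidableEq n]

lemma mpow_posDef {A : Matrix n n ℂ} (hA : A.PosDef) (r : ℝ) : (mpow A r).PosDef := by
  rw [mpow, dif_pos hA.isHermitian]
  refine (Matrix.IsUnit.posDef_star_right_conjugate_iff
    (Unitary.isUnit_coe (U := hA.isHermitian.eigenvectorUnitary))).2 ?_
  refine Matrix.PosDef.diagonal fun i => ?_
  exact_mod_cast Real.rpow_pos_of_pos (hA.eigenvalues_pos i) r

lemma mpow_mul_mpow {A : Matrix n n ℂ} (hA : A.PosDef) (r s : ℝ) :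
    mpow A r * mpow A s = mpow A (r + s) := by
  simp only [mpow, dif_pos hA.isHermitian]
  set U : Matrix n n ℂ := (hA.isHermitian.eigenvectorUnitary : Matrix n n ℂ)
  have hUU : star U * U = 1 := Unitary.coe_star_mul_self _
  simp only [Matrix.mul_assoc]
  rw [← Matrix.mul_assoc (star U) U, hUU, Matrix.one_mul,
    ← Matrix.mul_assoc (Matrix.diagonal _) (Matrix.diagonal _), Matrix.diagonal_mul_diagonal]
  simp only [Real.rpow_add (hA.eigenvalues_pos _), Complex.ofReal_mul]

lemma mpow_zero {A : Matrix n n ℂ} (hA : A.PosDef) : mpow A 0 = 1 := by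
  simp [mpow, dif_pos hA.isHermitian]

lemma mpow_one {A : Matrix n n ℂ} (hA : A.PosDef) : mpow A 1 = A := by
  rw [mpow, dif_pos hA.isHermitian]
  simp only [Real.rpow_one]
  exact (hA.isHermitian.spectral_theorem).symm

lemma mpow_half_mul_self {A : Matrix n n ℂ} (hA : A.PosDef) :
    mpow A (1/2) * mpow A (1/2) = A := by
  rw [mpow_mul_mpow hA, add_halves, mpow_one hA]

lemma Matrix.PosDef.mul_mul_self {X P : Matrix n n ℂ} (hX : X.PosDef) (hP : P.PosDef) :
    (P * X * P).PosDef := by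
  have h := (Matrix.IsUnit.posDef_star_right_conjugate_iff (x := X) hP.isUnit).2 hX
  rwa [Matrix.star_eq_conjTranspose, hP.isHermitian.eq] at h

lemma msharp_posDef {A B : Matrix n n ℂ} (hA : A.PosDef) (hB : B.PosDef) :
    (msharp A B).PosDef :=
  (mpow_posDef (hB.mul_mul_self (mpow_posDef hA _)) _).mul_mul_self (mpow_posDef hA _)

/-- The Riccati equation characterising the geometric mean `A⁻¹ ♯ B`. -/
lemma msharp_inv_mul_mul_self {A B : Matrix n n ℂ} (hA : A.PosDef) (hB : B.PosDef) :
    msharp A⁻¹ B * A * msharp A⁻¹ B = B := by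
  have hM := mpow_half_mul_self (hB.mul_mul_self (mpow_posDef hA.inv (-(1/2))))
  have hPQ : mpow A⁻¹ (1/2) * mpow A⁻¹ (-(1/2)) = 1 := by
    rw [mpow_mul_mpow hA.inv, add_neg_cancel, mpow_zero hA.inv]
  have hQP : mpow A⁻¹ (-(1/2)) * mpow A⁻¹ (1/2) = 1 := mul_eq_one_comm.1 hPQ
  have hPAP : mpow A⁻¹ (1/2) * (A * mpow A⁻¹ (1/2)) = 1 := by
    rw [mul_eq_one_comm, Matrix.mul_assoc, mpow_half_mul_self hA.inv,
      Matrix.mul_nonsing_inv _ ((Matrix.isUnit_iff_isUnit_det _).1 hA.isUnit)]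
  unfold msharp
  set P := mpow A⁻¹ (1/2)
  set Q := mpow A⁻¹ (-(1/2))
  set M := mpow (Q * B * Q) (1/2)
  calc P * M * P * A * (P * M * P) = P * M * (P * (A * P)) * M * P := by noncomm_ring
    _ = P * (M * M) * P := by rw [hPAP]; noncomm_ring
    _ = (P * Q) * B * (Q * P) := by rw [hM]; noncomm_ring
    _ = B := by rw [hPQ, hQP, Matrix.one_mul, Matrix.mul_one]

end Powers

/-- `(A ♮ B)²` is similar to `AB`; consequently they have the same
characteristic polynomial. -/
theorem mspec_sq_similar_mul {n : Type*} [Fintype n] [DecidableEq n]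
    (A B : Matrix n n ℂ) (hA : A.PosDef) (hB : B.PosDef) :
    (∃ S : Matrix n n ℂ, IsUnit S ∧ mspec A B * mspec A B = S⁻¹ * (A * B) * S) ∧
      (mspec A B * mspec A B).charpoly = (A * B).charpoly := by
  have hG := msharp_posDef hA.inv hB
  have hR := msharp_inv_mul_mul_self hA hB
  have hHH := mpow_half_mul_self hG
  have hH : (mpow (msharp A⁻¹ B) (1/2)).PosDef := mpow_posDef hG _
  have hdet := (Matrix.isUnit_iff_isUnit_det _).1 hH.isUnit
  unfold mspec
  set G := msharp A⁻¹ B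
  set H := mpow G (1/2)
  have hsq : H * A * H * (H * A * H) = H * (A * G * A * H) := by rw [← hHH]; noncomm_ring
  have hAB : A * G * A * H * H = A * B := by
    rw [Matrix.mul_assoc _ H H, hHH, ← hR]; noncomm_ring
  refine ⟨⟨H⁻¹, hH.inv.isUnit, ?_⟩, ?_⟩
  · rw [Matrix.nonsing_inv_nonsing_inv _ hdet, hsq, ← hAB, Matrix.mul_assoc H (_ * H) H⁻¹,
      Matrix.mul_nonsing_inv_cancel_right _ _ hdet]
  · rw [hsq, Matrix.charpoly_mul_comm, hAB]
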